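/- arXiv:1509.02898 — 4 statements merged into one kernel-verified Lean document; each statement's English description precedes it below -/
import Mathlib

section
/- Let k ≥ 3 and e ≥ 2 be integers. In the tensor product R(k,2^e−2) ⊗ R(k,2^e−2) over ZMod 2, the element (z_1·z_2·…·z_{k−2})^{2^{e+1}−1} · z_{k−1}^{2^{e+1}−2} · z_k^{2^e−1} is nonzero, where z_i = x_i ⊗ 1 + 1 ⊗ x_i. -/
/-!
Write `N = 2^e`, `x_i` and `y_i` for the generators of the two tensor factors, and let the staircase
monomial be `x_1^(m+k-1) x_2^(m+k-2) ⋯ x_k^m` with `m = N - 2`. The product of zero-divisors is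
nonzero because it divides the product of the staircase monomials in `x` and in `y`
(`zero_divisor_dvd`), and the staircase monomial is nonzero in `R(k,m)` (`stair_xGen_ne_zero`).

*Divisibility.* A partial staircase in `x_1, …, x_j` kills each of these variables and, by the
relation in `x_1, …, x_{j+1}`, also `x_{j+1}^(m+k-j)` (`stairTo_mul`). All binomial coefficients
`C(2^q - 1, i)` are odd, so after multiplication by a monomial exactly one term of
`(x + y)^(2^q - 1)` survives (`mul_add_pow_top`); this treats `z_1, …, z_{k-3}` one at a time.
For the last three variables `a, b, d` (and `av, bv, dv` in the second factor) one multiplies by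
`bv d^(N-3)`: then `bv (b + bv)^(2N-2)` becomes `b^N bv^(N-1)`, next `(a + av)^(2N-1)` becomes
`a^(N-1) av^N`, because `a^N b^N = 0`, and `a^(N-1) b^N = a^N b^(N-1)` restores the staircase shape.
Finally `d^(N-3) (d + dv)^(N-1)` becomes `d^(N-2) dv^(N-2)`.

*Nonvanishing.* Multiplication by the Vandermonde product carries the flag ideal into the ideal
generated by the powers `x_i^(m+k)` (`completeHomog_mul_vand_mem`), whereas it carries the staircase
monomial to `∏ x_i^(m+k-1)` modulo that ideal, up to sign (`stair_mul_vand`).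
-/

open scoped TensorProduct

/-- Complete homogeneous symmetric polynomial of degree `d` in a list of elements
of a commutative (semi)ring: `h_d(l)`. -/
noncomputable def completeHomog {R : Type*} [CommSemiring R] : List R → ℕ → R
  | [], 0 => 1
  | [], _ + 1 => 0
  | x :: l, d => ∑ t ∈ Finset.range (d + 1), x ^ t * completeHomog l (d - t)

/-- Elementary symmetric polynomial of degree `d` in a list of elements: `e_d(l)`. -/
noncomputable def elemSymm {R : Type*} [CommSemiring R] : List R → ℕ → R
  | _, 0 => 1
  | [], _ + 1 => 0
  | x :: l, d + 1 => elemSymm l (d + 1) + x * elemSymm l d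

/-- The ideal of `(ZMod 2)[x_1, …, x_k]` generated by the complete homogeneous
symmetric polynomials `h_{m+i}(x_1, …, x_{k+1-i})` for `1 ≤ i ≤ k`. -/
noncomputable def flagIdeal (k m : ℕ) : Ideal (MvPolynomial (Fin k) (ZMod 2)) :=
  Ideal.span { p | ∃ i : ℕ, 1 ≤ i ∧ i ≤ k ∧
    p = completeHomog (((List.finRange k).take (k + 1 - i)).map MvPolynomial.X) (m + i) }

/-- `R(k,m)`, the quotient of `(ZMod 2)[x_1, …, x_k]` by `flagIdeal k m`;
this is the mod-2 cohomology ring of the real flag manifold `F(1^k, m)`. -/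
abbrev FlagRing (k m : ℕ) : Type :=
  MvPolynomial (Fin k) (ZMod 2) ⧸ flagIdeal k m

/-- The image of the variable `x_{j+1}` in `R(k,m)` (`j` is 0-indexed). -/
noncomputable def xGen (k m : ℕ) (j : Fin k) : FlagRing k m :=
  Ideal.Quotient.mk (flagIdeal k m) (MvPolynomial.X j)

/-- The zero-divisor `z_{j+1} = x_{j+1} ⊗ 1 + 1 ⊗ x_{j+1}` in `R(k,m) ⊗ R(k,m)`. -/
noncomputable def zGen (k m : ℕ) (j : Fin k) :
    FlagRing k m ⊗[ZMod 2] FlagRing k m :=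
  xGen k m j ⊗ₜ 1 + 1 ⊗ₜ xGen k m j

/-- `x_{i+1,j+1}` in the `s`-fold tensor power `R(k,m)^{⊗ s}`: the element having
`x_{j+1}` in the `(i+1)`-st tensor factor and `1` elsewhere (`i`, `j` 0-indexed). -/
noncomputable def xT (k m s : ℕ) (i : Fin s) (j : Fin k) :
    ⨂[ZMod 2] _ : Fin s, FlagRing k m :=
  PiTensorProduct.tprod (ZMod 2) (fun t => if t = i then xGen k m j else 1)

/-- The `s`-th zero-divisor `z_{i+1,j+1} = x_{1,j+1} + x_{i+1,j+1}` in `R(k,m)^{⊗ s}`. -/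
noncomputable def zT (k m s : ℕ) (hs : 0 < s) (i : Fin s) (j : Fin k) :
    ⨂[ZMod 2] _ : Fin s, FlagRing k m :=
  xT k m s ⟨0, hs⟩ j + xT k m s i j

/-! ### Identities for complete homogeneous polynomials -/

section CompleteHomog

variable {R : Type*} [CommRing R]

lemma completeHomog_cons_zero (a : R) (l : List R) :
    completeHomog (a :: l) 0 = completeHomog l 0 := by
  simp [completeHomog]

lemma completeHomog_cons_succ (a : R) (l : List R) (d : ℕ) :
    completeHomog (a :: l) (d + 1) = completeHomog l (d + 1) + a * completeHomog (a :: l) d := by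
  rw [completeHomog, completeHomog, Finset.sum_range_succ', Finset.mul_sum, add_comm]
  congr 1
  · simp
  · refine Finset.sum_congr rfl fun t _ => ?_
    rw [Nat.add_sub_add_right, pow_succ']
    ring

lemma completeHomog_zero (l : List R) : completeHomog l 0 = 1 := by
  induction l with
  | nil => simp [completeHomog]
  | cons a l ih => rw [completeHomog_cons_zero, ih]

lemma completeHomog_singleton (a : R) (d : ℕ) : completeHomog [a] d = a ^ d := by
  induction d with
  | zero => simp [completeHomog_zero]
  | succ d ih => rw [completeHomog_cons_succ, ih, completeHomog, pow_succ']; ring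

/-- Divided-difference identity: removing one of two variables raises the degree by one. -/
lemma sub_mul_completeHomog (a b : R) (l : List R) (d : ℕ) :
    (a - b) * completeHomog (a :: b :: l) d =
      completeHomog (a :: l) (d + 1) - completeHomog (b :: l) (d + 1) := by
  induction d with
  | zero => simp [completeHomog_cons_succ, completeHomog_zero]
  | succ d ih =>
    rw [completeHomog_cons_succ a (b :: l), completeHomog_cons_succ a l (d + 1),
      completeHomog_cons_succ b l (d + 1)]
    linear_combination a * ih

lemma map_completeHomog {S : Type*} [CommRing S] (f : R →+* S) (l : List R) (d : ℕ) :
    f (completeHomog l d) = completeHomog (l.map f) d := by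
  induction l generalizing d with
  | nil => cases d <;> simp [completeHomog]
  | cons a l ih => simp [completeHomog, ih]

lemma mul_completeHomog_append (u : R) (l lt : List R) (h : ∀ a ∈ l, u * a = 0) (d : ℕ) :
    u * completeHomog (l ++ lt) d = u * completeHomog lt d := by
  induction l with
  | nil => rfl
  | cons a l ih =>
    have ih := ih fun b hb => h b (List.mem_cons_of_mem _ hb)
    have ha := h a List.mem_cons_self
    rw [← ih]
    cases d with
    | zero => simp [completeHomog_zero]
    | succ d =>
      rw [List.cons_append, completeHomog_cons_succ]
      linear_combination completeHomog (a :: (l ++ lt)) d * ha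

end CompleteHomog

/-! ### The top monomial is nonzero -/

section Vandermonde

variable {R : Type*} [CommRing R]

/-- The Vandermonde product `∏_{i<j} (a_i - a_j)` of a list. -/
def vand : List R → R
  | [] => 1
  | a :: l => (l.map fun b => a - b).prod * vand l

lemma vand_dvd_append (l lt : List R) : vand l ∣ vand (l ++ lt) := by
  induction l with
  | nil => simp [vand]
  | cons a l ih =>
    simp only [List.cons_append, vand, List.map_append, List.prod_append]
    exact mul_dvd_mul (Dvd.intro _ rfl) ih

/-- `h_d` times the Vandermonde product is an alternant whose largest exponent is
`d + (number of variables) - 1`, hence lies in the ideal of the corresponding powers. -/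
lemma completeHomog_mul_vand_mem (J : Ideal R) (n : ℕ) (l : List R) :
    ∀ (a : R) (d : ℕ), d + l.length = n → (∀ b ∈ a :: l, b ^ n ∈ J) →
      completeHomog (a :: l) d * vand (a :: l) ∈ J := by
  induction l with
  | nil =>
    intro a d hd h
    simp only [List.length_nil, add_zero] at hd
    rw [completeHomog_singleton, hd]
    exact J.mul_mem_right _ (h a List.mem_cons_self)
  | cons b l ih =>
    intro a d hd h
    simp only [List.length_cons] at hd
    have h1 := ih a (d + 1) (by omega) (fun c hc => h c (by simp at hc ⊢; tauto))
    have h2 := ih b (d + 1) (by omega) (fun c hc => h c (by simp at hc ⊢; tauto))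
    have key : completeHomog (a :: b :: l) d * vand (a :: b :: l) =
        (l.map fun c => b - c).prod * (completeHomog (a :: l) (d + 1) * vand (a :: l)) -
        (l.map fun c => a - c).prod * (completeHomog (b :: l) (d + 1) * vand (b :: l)) := by
      simp only [vand, List.map_cons, List.prod_cons]
      linear_combination ((l.map fun c => a - c).prod * (l.map fun c => b - c).prod * vand l) *
        sub_mul_completeHomog a b l d
    rw [key]
    exact J.sub_mem (J.mul_mem_left _ h1) (J.mul_mem_left _ h2)

/-- The staircase monomial `a_0^t a_1^(t-1) a_2^(t-2) ⋯` of a list. -/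
def stair : List R → ℕ → R
  | [], _ => 1
  | a :: l, t => a ^ t * stair l (t - 1)

lemma mul_prod_sub (u a : R) (l : List R) (h : u * a = 0) :
    u * (l.map fun b => a - b).prod = u * ((-1) ^ l.length * l.prod) := by
  induction l with
  | nil => simp
  | cons b l ih =>
    simp only [List.map_cons, List.prod_cons, List.length_cons]
    linear_combination (l.map fun b => a - b).prod * h - b * ih

/-- When all `n`-th powers vanish, only one term of the Vandermonde product survives
multiplication by the staircase monomial. The integer `c` counts the variables already treated,
each of which has contributed one factor `∏ l`. -/
lemma stair_mul_vand (n : ℕ) (l : List R) (h : ∀ a ∈ l, a ^ n = 0) :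
    ∀ c, c + l.length ≤ n → ∃ s : ℕ,
      stair l (n - 1 - c) * l.prod ^ c * vand l = (-1) ^ s * l.prod ^ (n - 1) := by
  induction l with
  | nil => intro c _; exact ⟨0, by simp [stair, vand]⟩
  | cons a l ih =>
    intro c hc
    simp only [List.length_cons] at hc
    obtain ⟨s, hs⟩ := ih (fun b hb => h b (List.mem_cons_of_mem _ hb)) (c + 1) (by omega)
    refine ⟨l.length + s, ?_⟩
    have ha : a ^ (n - 1) * a = 0 := by
      rw [← pow_succ, Nat.sub_add_cancel (by omega)]; exact h a List.mem_cons_self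
    have hp := mul_prod_sub _ a l ha
    have e1 : a ^ (n - 1 - c) * a ^ c = a ^ (n - 1) := by
      rw [← pow_add]; congr 1; omega
    have e2 : n - 1 - (c + 1) = n - 1 - c - 1 := by omega
    rw [e2, pow_succ] at hs
    simp only [stair, vand, List.prod_cons, mul_pow]
    calc _ = (a ^ (n - 1 - c) * a ^ c) * (l.map fun b => a - b).prod *
          (stair l (n - 1 - c - 1) * l.prod ^ c * vand l) := by ring
      _ = a ^ (n - 1) * (-1) ^ l.length *
          (stair l (n - 1 - c - 1) * (l.prod ^ c * l.prod) * vand l) := by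
        rw [e1, hp]; ring
      _ = _ := by rw [hs]; ring

lemma map_stair {S : Type*} [CommRing S] (f : R →+* S) (l : List R) (t : ℕ) :
    f (stair l t) = stair (l.map f) t := by
  induction l generalizing t with
  | nil => simp [stair]
  | cons a l ih => simp [stair, ih]

lemma stair_range (x : ℕ → R) (k t : ℕ) :
    stair ((List.range k).map x) t = ∏ i ∈ Finset.range k, x i ^ (t - i) := by
  induction k generalizing t x with
  | zero => simp [stair]
  | succ k ih =>
    rw [List.range_succ_eq_map, Finset.prod_range_succ', List.map_cons, List.map_map, stair,
      ih (x ∘ Nat.succ), mul_comm]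
    congr 1
    refine Finset.prod_congr rfl fun i _ => ?_
    simp only [Function.comp, Nat.succ_eq_add_one]
    congr 1; omega

end Vandermonde

/-- The staircase monomial `x_1^(m+k-1) x_2^(m+k-2) ⋯ x_k^m` is nonzero in `R(k,m)`. -/
lemma stair_xGen_ne_zero (k m : ℕ) :
    stair ((List.finRange k).map (xGen k m)) (m + k - 1) ≠ 0 := by
  intro h0
  let P := MvPolynomial (Fin k) (ZMod 2)
  let L : List P := (List.finRange k).map MvPolynomial.X
  let J : Ideal P := Ideal.span
    ((fun s => MvPolynomial.monomial s (1 : ZMod 2)) ''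
      Set.range fun i : Fin k => Finsupp.single i (m + k))
  have hJ : ∀ b ∈ L, b ^ (m + k) ∈ J := by
    intro b hb
    obtain ⟨i, -, rfl⟩ := List.mem_map.1 hb
    refine Ideal.subset_span ⟨_, ⟨i, rfl⟩, ?_⟩
    exact (MvPolynomial.X_pow_eq_monomial ..).symm
  -- multiplication by the Vandermonde product carries the flag ideal into `J`
  have hI : flagIdeal k m ≤ Submodule.comap (LinearMap.mulRight P (vand L)) J := by
    refine Ideal.span_le.2 ?_
    rintro p ⟨i, hi1, hik, rfl⟩
    change _ * vand L ∈ J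
    have hd : vand (L.take (k + 1 - i)) ∣ vand L := by
      conv_rhs => rw [← List.take_append_drop (k + 1 - i) L]
      exact vand_dvd_append _ _
    obtain ⟨c, hc⟩ := hd
    rw [hc, ← mul_assoc, List.map_take]
    refine J.mul_mem_right _ ?_
    change completeHomog (L.take (k + 1 - i)) (m + i) * _ ∈ J
    have hlen : (L.take (k + 1 - i)).length = k + 1 - i := by
      simp [L]; omega
    have hsub : ∀ b ∈ L.take (k + 1 - i), b ^ (m + k) ∈ J :=
      fun b hb => hJ b (List.mem_of_mem_take hb)
    cases hL : L.take (k + 1 - i) with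
    | nil => rw [hL] at hlen; simp at hlen; omega
    | cons a l =>
      rw [hL] at hlen hsub
      simp only [List.length_cons] at hlen
      exact completeHomog_mul_vand_mem J (m + k) l a (m + i) (by omega) hsub
  have hmem : stair L (m + k - 1) ∈ flagIdeal k m := by
    rw [← Ideal.Quotient.eq_zero_iff_mem, map_stair, List.map_map]
    exact h0
  have h1 : stair L (m + k - 1) * vand L ∈ J := hI hmem
  have h2 : L.prod ^ (m + k - 1) ∈ J := by
    obtain ⟨s, hs⟩ := stair_mul_vand (m + k) (L.map (Ideal.Quotient.mk J))
      (by
        intro a ha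
        obtain ⟨b, hb, rfl⟩ := List.mem_map.1 ha
        rw [← map_pow]
        exact Ideal.Quotient.eq_zero_iff_mem.2 (hJ b hb)) 0 (by simp [L])
    have hv : ∀ l : List P, Ideal.Quotient.mk J (vand l) = vand (l.map (Ideal.Quotient.mk J)) := by
      intro l
      induction l with
      | nil => simp [vand]
      | cons a l ih =>
        simp [vand, ih, map_list_prod, Function.comp_def]
    rw [← Ideal.Quotient.eq_zero_iff_mem, map_mul, map_stair, hv] at h1
    rw [Nat.sub_zero, pow_zero, mul_one, h1] at hs
    rw [← Ideal.Quotient.eq_zero_iff_mem, map_pow, map_list_prod]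
    have hu : IsUnit ((-1 : P ⧸ J) ^ s) :=
      IsUnit.pow s (IsUnit.of_mul_eq_one (-1) (by ring))
    exact (hu.mul_right_eq_zero).1 hs.symm
  have h3 : L.prod ^ (m + k - 1) =
      MvPolynomial.monomial (Finsupp.equivFunOnFinite.symm fun _ : Fin k => m + k - 1)
        (1 : ZMod 2) := by
    rw [MvPolynomial.monomial_eq, Finsupp.prod_fintype _ _ (by simp)]
    simp only [map_one, one_mul, Finsupp.equivFunOnFinite_symm_apply_apply, L]
    rw [Finset.prod_pow, ← List.prod_ofFn, List.ofFn_eq_map]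
  rw [h3, MvPolynomial.mem_ideal_span_monomial_image] at h2
  obtain ⟨_, ⟨i, rfl⟩, hle⟩ := h2 (Finsupp.equivFunOnFinite.symm fun _ : Fin k => m + k - 1)
    (by simp [MvPolynomial.support_monomial])
  have := hle i
  have hi := i.2
  simp at this
  omega

/-! ### Powers of zero-divisors in characteristic two -/

section CharTwo

variable {S : Type*} [CommRing S]

lemma add_pow_two_pow (h2 : (2 : S) = 0) (x y : S) (q : ℕ) :
    (x + y) ^ 2 ^ q = x ^ 2 ^ q + y ^ 2 ^ q := by
  induction q with
  | zero => simp
  | succ q ih =>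
    rw [pow_succ, pow_mul, ih, pow_mul, pow_mul]
    linear_combination x ^ 2 ^ q * y ^ 2 ^ q * h2

/-- All binomial coefficients `C(2^q - 1, i)` are odd. -/
lemma add_pow_two_pow_sub_one (h2 : (2 : S) = 0) (x y : S) (q : ℕ) :
    (x + y) ^ (2 ^ q - 1) = ∑ i ∈ Finset.range (2 ^ q), x ^ i * y ^ (2 ^ q - 1 - i) := by
  induction q with
  | zero => simp
  | succ q ih =>
    have hq : 0 < 2 ^ q := by positivity
    have e1 : 2 ^ (q + 1) - 1 = 2 ^ q + (2 ^ q - 1) := by rw [pow_succ]; omega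
    have e2 : 2 ^ (q + 1) = 2 ^ q + 2 ^ q := by rw [pow_succ]; omega
    rw [e1, pow_add, add_pow_two_pow h2, ih, e2, Finset.sum_range_add, add_comm (x ^ 2 ^ q),
      add_mul, Finset.mul_sum, Finset.mul_sum]
    congr 1
    · refine Finset.sum_congr rfl fun i hi => ?_
      rw [Finset.mem_range] at hi
      rw [show 2 ^ q + (2 ^ q - 1) - i = 2 ^ q + (2 ^ q - 1 - i) by omega, pow_add]
      ring
    · refine Finset.sum_congr rfl fun i hi => ?_
      rw [show 2 ^ q + (2 ^ q - 1) - (2 ^ q + i) = 2 ^ q - 1 - i by omega, pow_add]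
      ring

/-- If `u` kills `x^(t+1)` and `y^(s+1)`, only the term `x^t y^s` of an expression of
degree `t + s` survives multiplication by `u`. -/
lemma mul_add_pow_top (h2 : (2 : S) = 0) (u x y : S) (q a b t s : ℕ)
    (hx : u * x ^ (t + 1) = 0) (hy : u * y ^ (s + 1) = 0) (ha : a ≤ t) (hb : b ≤ s)
    (hab : a + b + (2 ^ q - 1) = t + s) :
    u * (x + y) ^ (2 ^ q - 1) * (x ^ a * y ^ b) = u * (x ^ t * y ^ s) := by
  have hq : 0 < 2 ^ q := by positivity
  rw [add_pow_two_pow_sub_one h2, Finset.mul_sum, Finset.sum_mul,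
    Finset.sum_eq_single (t - a)]
  · obtain ⟨c, rfl⟩ := Nat.exists_eq_add_of_le ha
    obtain ⟨d, rfl⟩ := Nat.exists_eq_add_of_le hb
    rw [show a + c - a = c by omega, show 2 ^ q - 1 - c = d by omega]
    ring
  · intro i hi hne
    rw [Finset.mem_range] at hi
    rcases Nat.lt_or_ge (t - a) i with hlt | hge
    · obtain ⟨c, hc⟩ := Nat.exists_eq_add_of_le (show t + 1 ≤ i + a by omega)
      calc _ = u * x ^ (i + a) * (y ^ (2 ^ q - 1 - i) * y ^ b) := by ring
        _ = u * x ^ (t + 1) * (x ^ c * (y ^ (2 ^ q - 1 - i) * y ^ b)) := by rw [hc]; ring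
        _ = 0 := by rw [hx, zero_mul]
    · obtain ⟨c, hc⟩ := Nat.exists_eq_add_of_le (show s + 1 ≤ 2 ^ q - 1 - i + b by omega)
      calc _ = u * y ^ (2 ^ q - 1 - i + b) * (x ^ i * x ^ a) := by ring
        _ = u * y ^ (s + 1) * (y ^ c * (x ^ i * x ^ a)) := by rw [hc]; ring
        _ = 0 := by rw [hy, zero_mul]
  · intro h
    rw [Finset.mem_range] at h
    omega

end CharTwo

/-! ### The staircase monomial as a multiple of the product of zero-divisors -/

section Divisibility

variable {S : Type*} [CommRing S]

/-- The partial staircase `x_0^t x_1^(t-1) ⋯ x_{j-1}^(t-j+1)`. -/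
def stairTo (x : ℕ → S) (t j : ℕ) : S := ∏ i ∈ Finset.range j, x i ^ (t - i)

lemma stairTo_succ (x : ℕ → S) (t j : ℕ) :
    stairTo x t (j + 1) = stairTo x t j * x j ^ (t - j) := Finset.prod_range_succ _ _

/-- A partial staircase kills the variables it involves and the next power of the
following variable. -/
lemma stairTo_mul (x : ℕ → S) (k t : ℕ) (hkt : k ≤ t + 1)
    (h : ∀ r < k, completeHomog ((List.range (r + 1)).map x) (t + 1 - r) = 0) (j : ℕ)
    (hj : j ≤ k) :
    (∀ i < j, stairTo x t j * x i = 0) ∧ (j < k → stairTo x t j * x j ^ (t - j + 1) = 0) := by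
  induction j with
  | zero =>
    refine ⟨by simp, fun hk => ?_⟩
    have := h 0 hk
    simpa [stairTo, completeHomog_singleton] using this
  | succ j ih =>
    obtain ⟨ih1, ih2⟩ := ih (by omega)
    have h1 : ∀ i < j + 1, stairTo x t (j + 1) * x i = 0 := by
      intro i hi
      rw [stairTo_succ]
      rcases Nat.lt_succ_iff_lt_or_eq.1 hi with hlt | rfl
      · linear_combination x j ^ (t - j) * ih1 i hlt
      · rw [mul_assoc, ← pow_succ]
        exact ih2 (by omega)
    refine ⟨h1, fun hjk => ?_⟩
    have := mul_completeHomog_append (stairTo x t (j + 1)) ((List.range (j + 1)).map x) [x (j + 1)]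
      (by
        intro a ha
        obtain ⟨i, hi, rfl⟩ := List.mem_map.1 ha
        exact h1 i (List.mem_range.1 hi)) (t + 1 - (j + 1))
    have h0 := h (j + 1) hjk
    rw [List.range_succ, List.map_append, List.map_singleton] at h0
    rw [h0, mul_zero, completeHomog_singleton] at this
    rw [show t - (j + 1) + 1 = t + 1 - (j + 1) by omega]
    exact this.symm

/-- The two-variable relation `h_{M+1}(a, b) = 0`, multiplied by `a^(M+1)`, `a^M` and `a - b`. -/
lemma two_var_relations (u a b : S) (M : ℕ) (ha : u * a ^ (M + 2) = 0)
    (h : u * completeHomog [a, b] (M + 1) = 0) :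
    u * a ^ (M + 1) * b ^ (M + 1) = 0 ∧
      u * a ^ M * b ^ (M + 1) = - (u * a ^ (M + 1) * b ^ M) ∧ u * b ^ (M + 2) = 0 := by
  have e1 := completeHomog_cons_succ a [b] M
  rw [completeHomog_singleton] at e1
  have e3 := sub_mul_completeHomog a b [] (M + 1)
  rw [completeHomog_singleton, completeHomog_singleton] at e3
  -- modulo `a`, the polynomial `h_M(a, b)` is `b ^ M`
  obtain ⟨c, hc⟩ : ∃ c, completeHomog [a, b] M = b ^ M + a * c := by
    cases M with
    | zero => exact ⟨0, by simp [completeHomog_zero]⟩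
    | succ M => exact ⟨_, by rw [completeHomog_cons_succ, completeHomog_singleton]⟩
  rw [e1, hc] at h
  refine ⟨?_, ?_, ?_⟩
  · linear_combination a ^ (M + 1) * h - (b ^ M + a * c) * ha
  · linear_combination a ^ M * h - c * ha
  · rw [e1, hc] at e3
    linear_combination ha - (a - b) * h + u * e3

/-- The inductive part of the divisibility: each `z_i ^ (2^(e+1) - 1)`, multiplied by a suitable
monomial in `x_i, y_i`, extends the partial staircases by one variable. -/
lemma first_dvd (h2 : (2 : S) = 0) (x y : ℕ → S) (p e : ℕ)
    (hx : ∀ r < p + 3, completeHomog ((List.range (r + 1)).map x) (2 ^ e + p + 1 - r) = 0)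
    (hy : ∀ r < p + 3, completeHomog ((List.range (r + 1)).map y) (2 ^ e + p + 1 - r) = 0)
    (he : 2 ≤ 2 ^ e) (j : ℕ) (hj : j ≤ p) :
    (∏ i ∈ Finset.range j, (x i + y i)) ^ (2 ^ (e + 1) - 1) ∣
      stairTo x (2 ^ e + p) j * stairTo y (2 ^ e + p) j := by
  induction j with
  | zero => simp [stairTo]
  | succ j ih =>
    obtain ⟨c, hc⟩ := ih (by omega)
    have hX := (stairTo_mul x (p + 3) _ (by omega) hx j (by omega)).2 (by omega)
    have hY := (stairTo_mul y (p + 3) _ (by omega) hy j (by omega)).2 (by omega)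
    have key := mul_add_pow_top h2 (stairTo x (2 ^ e + p) j * stairTo y (2 ^ e + p) j)
      (x j) (y j) (e + 1) (p - j) (p - j + 1) (2 ^ e + p - j) (2 ^ e + p - j)
      (by linear_combination stairTo y (2 ^ e + p) j * hX)
      (by linear_combination stairTo x (2 ^ e + p) j * hY)
      (by omega) (by omega) (by rw [pow_succ]; omega)
    refine ⟨c * (x j ^ (p - j) * y j ^ (p - j + 1)), ?_⟩
    rw [stairTo_succ, stairTo_succ, Finset.prod_range_succ, mul_pow]
    calc _ = _ := (by ring : _ = stairTo x (2 ^ e + p) j * stairTo y (2 ^ e + p) j *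
          (x j ^ (2 ^ e + p - j) * y j ^ (2 ^ e + p - j)))
      _ = _ := by rw [← key, hc]; ring

/-- In any ring where the flag relations hold for both `x` and `y`, the product of
zero-divisors divides the product of the two full staircase monomials. -/
lemma zero_divisor_dvd (h2 : (2 : S) = 0) (x y : ℕ → S) (p e : ℕ)
    (hx : ∀ r < p + 3, completeHomog ((List.range (r + 1)).map x) (2 ^ e + p + 1 - r) = 0)
    (hy : ∀ r < p + 3, completeHomog ((List.range (r + 1)).map y) (2 ^ e + p + 1 - r) = 0)
    (he : 2 ≤ e) :
    (∏ i ∈ Finset.range (p + 1), (x i + y i)) ^ (2 ^ (e + 1) - 1) *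
        (x (p + 1) + y (p + 1)) ^ (2 ^ (e + 1) - 2) * (x (p + 2) + y (p + 2)) ^ (2 ^ e - 1) ∣
      stairTo x (2 ^ e + p) (p + 3) * stairTo y (2 ^ e + p) (p + 3) := by
  have hN : 2 ^ 2 ≤ 2 ^ e := Nat.pow_le_pow_right (by norm_num) he
  obtain ⟨c, hc⟩ := first_dvd h2 x y p e hx hy (by omega) p le_rfl
  obtain ⟨H, hH⟩ : ∃ H, 2 ^ e = 2 * H := ⟨2 ^ (e - 1), by
    rw [← pow_succ']; congr 1; omega⟩
  obtain ⟨M, hM⟩ : ∃ M, 2 ^ e = M + 1 := ⟨2 ^ e - 1, by omega⟩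
  -- relations for the last three variables, modulo the annihilator of the partial staircase
  have rel : ∀ w : ℕ → S,
      (∀ r < p + 3, completeHomog ((List.range (r + 1)).map w) (2 ^ e + p + 1 - r) = 0) →
      stairTo w (2 ^ e + p) p * w p ^ (M + 2) = 0 ∧
      stairTo w (2 ^ e + p) p * w p ^ (M + 1) * w (p + 1) ^ (M + 1) = 0 ∧
      stairTo w (2 ^ e + p) p * w p ^ M * w (p + 1) ^ (M + 1) =
        stairTo w (2 ^ e + p) p * w p ^ (M + 1) * w (p + 1) ^ M ∧
      stairTo w (2 ^ e + p) p * w (p + 1) ^ (M + 2) = 0 ∧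
      stairTo w (2 ^ e + p) p * w p ^ (M + 1) * w (p + 1) ^ M * w (p + 2) ^ M = 0 ∧
      stairTo w (2 ^ e + p) (p + 3) =
        stairTo w (2 ^ e + p) p * w p ^ (M + 1) * w (p + 1) ^ M * w (p + 2) ^ (M - 1) := by
    intro w hw
    obtain ⟨h1, h3⟩ := stairTo_mul w (p + 3) _ (by omega) hw p (by omega)
    have h4 := (stairTo_mul w (p + 3) _ (by omega) hw (p + 2) (by omega)).2 (by omega)
    have h3 := h3 (by omega)
    rw [show 2 ^ e + p - p + 1 = M + 2 by omega] at h3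
    have h5 := mul_completeHomog_append (stairTo w (2 ^ e + p) p) ((List.range p).map w)
      [w p, w (p + 1)]
      (by
        intro a ha
        obtain ⟨i, hi, rfl⟩ := List.mem_map.1 ha
        exact h1 i (List.mem_range.1 hi)) (M + 1)
    have h6 := hw (p + 1) (by omega)
    rw [List.range_succ, List.range_succ, List.append_assoc, List.map_append,
      show 2 ^ e + p + 1 - (p + 1) = M + 1 by omega] at h6
    simp only [List.map_cons, List.map_nil, List.cons_append,
      List.nil_append] at h6
    rw [h6, mul_zero] at h5
    obtain ⟨r1, r2, r3⟩ := two_var_relations _ _ _ M h3 h5.symm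
    have e2 : stairTo w (2 ^ e + p) (p + 2) =
        stairTo w (2 ^ e + p) p * w p ^ (M + 1) * w (p + 1) ^ M := by
      rw [stairTo_succ, stairTo_succ, show 2 ^ e + p - p = M + 1 by omega,
        show 2 ^ e + p - (p + 1) = M by omega]
    refine ⟨h3, r1, ?_, r3, ?_, ?_⟩
    · rw [r2]
      linear_combination -(stairTo w (2 ^ e + p) p * w p ^ (M + 1) * w (p + 1) ^ M) * h2
    · rw [← e2]
      rwa [show 2 ^ e + p - (p + 2) + 1 = M by omega] at h4
    · rw [stairTo_succ, e2, show 2 ^ e + p - (p + 2) = M - 1 by omega]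
  obtain ⟨x1, x2, x3, x4, x5, x6⟩ := rel x hx
  obtain ⟨y1, y2, y3, y4, y5, y6⟩ := rel y hy
  rw [x6, y6]
  generalize stairTo x (2 ^ e + p) p = A at *
  generalize stairTo y (2 ^ e + p) p = B at *
  rw [Finset.prod_range_succ, mul_pow]
  generalize (∏ i ∈ Finset.range p, (x i + y i)) ^ (2 ^ (e + 1) - 1) = Q at *
  generalize x p = a at *
  generalize x (p + 1) = b at *
  generalize x (p + 2) = d at *
  generalize y p = av at *
  generalize y (p + 1) = bv at *
  generalize y (p + 2) = dv at *
  -- the square of `z ^ (2 ^ e - 1)`, as a power of `b ^ 2 + bv ^ 2`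
  have k2 := mul_add_pow_top h2 (A * B * bv) (b ^ 2) (bv ^ 2) e 0 0 H (H - 1)
    (by
      rw [← pow_mul, show 2 * (H + 1) = M + 2 + 1 by omega]
      linear_combination B * bv * b * x4)
    (by
      rw [← pow_mul, show 2 * (H - 1 + 1) = M + 1 by omega]
      linear_combination A * y4)
    (by omega) (by omega) (by omega)
  have sq : (b ^ 2 + bv ^ 2) ^ (2 ^ e - 1) = (b + bv) ^ (2 ^ (e + 1) - 2) := by
    rw [show 2 ^ (e + 1) - 2 = 2 * (2 ^ e - 1) by rw [pow_succ]; omega, pow_mul]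
    congr 1
    linear_combination -b * bv * h2
  rw [sq, pow_zero, pow_zero, ← pow_mul, ← pow_mul, show 2 * H = M + 1 by omega,
    show 2 * (H - 1) = M - 1 by omega] at k2
  have k2' : A * B * bv * (b + bv) ^ (2 ^ (e + 1) - 2) = A * B * (b ^ (M + 1) * bv ^ M) := by
    have : bv ^ M = bv * bv ^ (M - 1) := by rw [← pow_succ']; congr 1; omega
    rw [this]
    linear_combination k2
  have k1 := mul_add_pow_top h2 (A * B * (b ^ (M + 1) * bv ^ M)) a av (e + 1) 0 0 M (M + 1)
    (by linear_combination B * bv ^ M * x2)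
    (by linear_combination A * b ^ (M + 1) * bv ^ M * y1)
    (by omega) (by omega) (by rw [pow_succ]; omega)
  have k3 := mul_add_pow_top h2 ((A * a ^ (M + 1) * b ^ M) * (B * av ^ (M + 1) * bv ^ M))
    d dv e (M - 2) 0 (M - 1) (M - 1)
    (by
      rw [Nat.sub_add_cancel (by omega)]
      linear_combination (B * av ^ (M + 1) * bv ^ M) * x5)
    (by
      rw [Nat.sub_add_cancel (by omega)]
      linear_combination (A * a ^ (M + 1) * b ^ M) * y5)
    (by omega) (by omega) (by omega)
  refine ⟨c * bv * d ^ (M - 2), ?_⟩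
  generalize (d + dv) ^ (2 ^ e - 1) = Z3 at *
  generalize (b + bv) ^ (2 ^ (e + 1) - 2) = Z2 at *
  generalize (a + av) ^ (2 ^ (e + 1) - 1) = Z1 at *
  linear_combination Z1 * Z2 * Z3 * bv * d ^ (M - 2) * hc - k3
    - Z1 * Z3 * d ^ (M - 2) * k2' - Z3 * d ^ (M - 2) * k1
    - Z3 * d ^ (M - 2) * B * av ^ (M + 1) * bv ^ M * x3


/-- If the generators `g` of an `𝔽₂`-algebra satisfy the flag relations and their staircase
monomial is nonzero, then the product of zero-divisors in the tensor square is nonzero. -/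
lemma tensor_ne_zero {R : Type*} [CommRing R] [Algebra (ZMod 2) R] (g : ℕ → R) (p e : ℕ)
    (he : 2 ≤ e)
    (hrel : ∀ r < p + 3, completeHomog ((List.range (r + 1)).map g) (2 ^ e + p + 1 - r) = 0)
    (hne : stairTo g (2 ^ e + p) (p + 3) ≠ 0) (z : ℕ → R ⊗[ZMod 2] R)
    (hz : ∀ i, z i = g i ⊗ₜ 1 + 1 ⊗ₜ g i) :
    (∏ i ∈ Finset.range (p + 1), z i) ^ (2 ^ (e + 1) - 1) *
      z (p + 1) ^ (2 ^ (e + 1) - 2) * z (p + 2) ^ (2 ^ e - 1) ≠ 0 := by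
  let ι₁ : R →ₐ[ZMod 2] R ⊗[ZMod 2] R := Algebra.TensorProduct.includeLeft
  let ι₂ : R →ₐ[ZMod 2] R ⊗[ZMod 2] R := Algebra.TensorProduct.includeRight
  have h2 : (2 : R ⊗[ZMod 2] R) = 0 := by
    have : algebraMap (ZMod 2) (R ⊗[ZMod 2] R) 2 = 0 := by
      rw [show (2 : ZMod 2) = 0 from rfl, map_zero]
    rw [← this, map_ofNat]
  have hι : ∀ f : R →ₐ[ZMod 2] R ⊗[ZMod 2] R, ∀ r < p + 3,
      completeHomog ((List.range (r + 1)).map fun i => f (g i)) (2 ^ e + p + 1 - r) = 0 := by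
    intro f r hr
    have := map_completeHomog (f : R →+* R ⊗[ZMod 2] R) ((List.range (r + 1)).map g)
      (2 ^ e + p + 1 - r)
    rw [hrel r hr, map_zero, List.map_map] at this
    exact this.symm
  have hdvd := zero_divisor_dvd h2 (fun i => ι₁ (g i)) (fun i => ι₂ (g i)) p e (hι ι₁) (hι ι₂) he
  have hstair : ∀ f : R →ₐ[ZMod 2] R ⊗[ZMod 2] R,
      stairTo (fun i => f (g i)) (2 ^ e + p) (p + 3) = f (stairTo g (2 ^ e + p) (p + 3)) := by
    intro f
    simp [stairTo, map_prod]
  obtain rfl : z = fun i => ι₁ (g i) + ι₂ (g i) := funext hz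
  rw [hstair, hstair] at hdvd
  intro hzero
  rw [hzero] at hdvd
  have h0 := zero_dvd_iff.1 hdvd
  simp only [ι₁, ι₂, Algebra.TensorProduct.includeLeft_apply,
    Algebra.TensorProduct.includeRight_apply, Algebra.TensorProduct.tmul_mul_tmul, mul_one,
    one_mul] at h0
  generalize stairTo g (2 ^ e + p) (p + 3) = w at h0 hne
  -- over a field, a pure tensor of nonzero vectors is detected by a functional on each factor
  obtain ⟨φ, hφ⟩ : ∃ φ : Module.Dual (ZMod 2) R, φ w ≠ 0 := by
    by_contra! h
    exact hne ((Module.forall_dual_apply_eq_zero_iff (ZMod 2) w).1 h)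
  have h1 := congrArg (LinearMap.mul' (ZMod 2) (ZMod 2)) (congrArg (TensorProduct.map φ φ) h0)
  rw [TensorProduct.map_tmul, LinearMap.mul'_apply, map_zero, map_zero] at h1
  exact mul_ne_zero hφ hφ h1

end Divisibility

/-- for `k ≥ 3` and `e ≥ 2`,
`(z_1 ⋯ z_{k-2})^{2^{e+1}-1} · z_{k-1}^{2^{e+1}-2} · z_k^{2^e-1} ≠ 0` in
`R(k, 2^e-2) ⊗ R(k, 2^e-2)`. -/
theorem statement10 (k e : ℕ) (hk : 3 ≤ k) (he : 2 ≤ e) :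
    (∏ j ∈ Finset.univ.filter (fun j : Fin k => j.val < k - 2),
        zGen k (2 ^ e - 2) j) ^ (2 ^ (e + 1) - 1) *
      zGen k (2 ^ e - 2) ⟨k - 2, by omega⟩ ^ (2 ^ (e + 1) - 2) *
      zGen k (2 ^ e - 2) ⟨k - 1, by omega⟩ ^ (2 ^ e - 1) ≠ 0 := by
  obtain ⟨p, rfl⟩ : ∃ p, k = p + 3 := ⟨k - 3, by omega⟩
  have hN : 2 ^ 2 ≤ 2 ^ e := Nat.pow_le_pow_right (by norm_num) he
  set m := 2 ^ e - 2 with hm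
  -- the generators, extended by zero to a sequence
  let g : ℕ → FlagRing (p + 3) m := fun i => if h : i < p + 3 then xGen (p + 3) m ⟨i, h⟩ else 0
  have hg : ∀ i : Fin (p + 3), g i.val = xGen (p + 3) m i := fun i => by simp [g]
  have hlist : (List.range (p + 3)).map g = (List.finRange (p + 3)).map (xGen (p + 3) m) := by
    rw [← List.map_coe_finRange_eq_range, List.map_map]
    exact List.map_congr_left fun i _ => hg i
  have hrel : ∀ r < p + 3,
      completeHomog ((List.range (r + 1)).map g) (2 ^ e + p + 1 - r) = 0 := by
    intro r hr
    have hmem : completeHomog (((List.finRange (p + 3)).take (p + 3 + 1 - (p + 3 - r))).map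
        MvPolynomial.X) (m + (p + 3 - r)) ∈ flagIdeal (p + 3) m :=
      Ideal.subset_span ⟨p + 3 - r, by omega, by omega, rfl⟩
    have h0 := Ideal.Quotient.eq_zero_iff_mem.2 hmem
    rw [map_completeHomog, List.map_map, List.map_take] at h0
    change completeHomog (List.take _ ((List.finRange (p + 3)).map (xGen (p + 3) m))) _ = 0 at h0
    rw [← hlist, ← List.map_take, List.take_range,
      show min (p + 3 + 1 - (p + 3 - r)) (p + 3) = r + 1 by omega,
      show m + (p + 3 - r) = 2 ^ e + p + 1 - r by omega] at h0
    exact h0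
  have hne : stairTo g (2 ^ e + p) (p + 3) ≠ 0 := by
    have h := stair_xGen_ne_zero (p + 3) m
    rwa [← hlist, stair_range, show m + (p + 3) - 1 = 2 ^ e + p by omega] at h
  have hprod : ∏ j ∈ Finset.univ.filter (fun j : Fin (p + 3) => j.val < p + 3 - 2),
      zGen (p + 3) m j = ∏ i ∈ Finset.range (p + 1), (g i ⊗ₜ[ZMod 2] 1 + 1 ⊗ₜ[ZMod 2] g i) := by
    refine Finset.prod_bij (fun j _ => j.val) ?_ ?_ ?_ ?_
    · intro j hj
      simp at hj ⊢
      omega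
    · intro i _ j _ h
      exact Fin.ext h
    · intro i hi
      rw [Finset.mem_range] at hi
      exact ⟨⟨i, by omega⟩, by simp; omega, rfl⟩
    · intro j _
      rw [hg, zGen]
  have key := tensor_ne_zero g p e he hrel hne _ (fun _ => rfl)
  rw [hprod]
  have h1 := hg ⟨p + 1, by omega⟩
  have h2 := hg ⟨p + 2, by omega⟩
  simp only at h1 h2
  rw [h1, h2] at key
  exact key
end

section
/- Let k, m, s be positive integers with s ≥ 2, and let 2 ≤ i ≤ s. In R(k,m)^{⊗s}, the element z_{i,1}^{m+k−1} · z_{i,2}^{m+k−2} · … · z_{i,k−1}^{m+1} · z_{i,k}^m − x_{i,1}^{m+k−1}·x_{i,2}^{m+k−2}·…·x_{i,k}^m lies in the ZMod 2-linear span of the tensor-basis elements x_1(r_1,…,r_k)·x_i(t_1,…,t_k) (products of basis monomials placed in the 1st and i-th tensor factors, with all other factors equal to 1) in which r_j > 0 for at least one j ∈ {1,…,k}. In particular this difference lies in the ideal of R(k,m)^{⊗s} generated by x_{1,1},…,x_{1,k}. -/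
/-!
Expand each factor by the binomial theorem: with `n_j = m + k - 1 - j` (`j` counted from `0`),
`∏ j, (a_j + b_j) ^ n_j` is a sum over exponent vectors `p ≤ n` of natural multiples of
`∏ j, a_j ^ p_j * ∏ j, b_j ^ (n_j - p_j)`. The term `p = 0` is `∏ j, b_j ^ n_j`, which the
subtraction removes, and every other term has some `p_j > 0`. Since `p_j` and `n_j - p_j` are at
most `n_j`, the remaining terms are already multiples of tensor-basis elements, so no relation
of `R(k,m)` is needed. Each of them is visibly divisible by some `a_j = x_{1,j}`, which gives the
ideal membership.
-/

open scoped TensorProduct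

/-- Binomial expansion of `∏ j, (a j + b j) ^ n j` without its `p = 0` term, phrased as membership
in any additive submonoid `S` containing the monomials `∏ a ^ p * ∏ b ^ (n - p)` with
`0 ≠ p ≤ n`; this covers a linear span and an ideal alike. -/
lemma prod_add_pow_sub_mem {A : Type*} [CommRing A] {k : ℕ} (a b : Fin k → A) (n : Fin k → ℕ)
    (S : AddSubmonoid A)
    (hS : ∀ p : Fin k → ℕ, (∀ j, p j ≤ n j) → (∃ j, 0 < p j) →
      (∏ j, a j ^ p j) * (∏ j, b j ^ (n j - p j)) ∈ S) :
    (∏ j, (a j + b j) ^ n j) - ∏ j, b j ^ n j ∈ S := by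
  classical
  have h0 : (0 : Fin k → ℕ) ∈ Fintype.piFinset (fun j => Finset.range (n j + 1)) := by
    simp
  simp_rw [add_pow]
  rw [Finset.prod_univ_sum, ← Finset.add_sum_erase _ _ h0]
  simp only [Pi.zero_apply, pow_zero, one_mul, Nat.sub_zero, Nat.choose_zero_right, Nat.cast_one,
    mul_one, add_sub_cancel_left]
  refine sum_mem fun p hp => ?_
  rw [Finset.mem_erase, Fintype.mem_piFinset] at hp
  obtain ⟨hp0, hp⟩ := hp
  have hex : ∃ j, 0 < p j := by
    by_contra! h
    exact hp0 (funext fun j => Nat.le_zero.mp (h j))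
  rw [Finset.prod_mul_distrib, Finset.prod_mul_distrib, ← Nat.cast_prod, mul_comm, ← nsmul_eq_mul]
  exact S.nsmul_mem (hS p (fun j => Nat.lt_succ_iff.mp (Finset.mem_range.mp (hp j))) hex) _

/-- for `2 ≤ i ≤ s`, the element
`z_{i,1}^{m+k-1} z_{i,2}^{m+k-2} ⋯ z_{i,k}^m − x_{i,1}^{m+k-1} ⋯ x_{i,k}^m` of
`R(k,m)^{⊗s}` lies in the `ZMod 2`-linear span of the tensor-basis elements
`x_1(r_1,…,r_k) · x_i(t_1,…,t_k)` with `r_j > 0` for some `j`; in particular it lies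
in the ideal generated by `x_{1,1}, …, x_{1,k}`. -/
theorem statement14 (k m s : ℕ) (hk : 0 < k) (hm : 0 < m) (hs : 2 ≤ s)
    (i : Fin s) (hi : 0 < i.val) :
    ((∏ j : Fin k, zT k m s (by omega) i j ^ (m + k - 1 - j.val)) -
        (∏ j : Fin k, xT k m s i j ^ (m + k - 1 - j.val)) ∈
      Submodule.span (ZMod 2)
        { y : ⨂[ZMod 2] _ : Fin s, FlagRing k m | ∃ r t : Fin k → ℕ,
            (∀ j : Fin k, r j + j.val < m + k) ∧
            (∀ j : Fin k, t j + j.val < m + k) ∧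
            (∃ j : Fin k, 0 < r j) ∧
            y = (∏ j : Fin k, xT k m s ⟨0, by omega⟩ j ^ r j) *
                (∏ j : Fin k, xT k m s i j ^ t j) }) ∧
    ((∏ j : Fin k, zT k m s (by omega) i j ^ (m + k - 1 - j.val)) -
        (∏ j : Fin k, xT k m s i j ^ (m + k - 1 - j.val)) ∈
      Ideal.span (Set.range (xT k m s ⟨0, by omega⟩))) := by
  constructor
  · refine prod_add_pow_sub_mem (xT k m s ⟨0, by omega⟩) (xT k m s i)
      (fun j => m + k - 1 - j.val) (Submodule.toAddSubmonoid (Submodule.span (ZMod 2) _)) ?_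
    intro p hp hex
    refine Submodule.subset_span ⟨p, fun j => m + k - 1 - j.val - p j, ?_, ?_, hex, rfl⟩
    · intro j
      have := hp j
      have := j.isLt
      omega
    · intro j
      have := j.isLt
      dsimp only
      omega
  · refine prod_add_pow_sub_mem (xT k m s ⟨0, by omega⟩) (xT k m s i)
      (fun j => m + k - 1 - j.val) (Submodule.toAddSubmonoid (Ideal.span _)) ?_
    rintro p - ⟨j, hj⟩
    refine Ideal.mul_mem_right _ _ ?_
    refine Ideal.mem_of_dvd _ (Finset.dvd_prod_of_mem _ (Finset.mem_univ j)) ?_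
    exact Ideal.pow_mem_of_mem _ (Ideal.subset_span (Set.mem_range_self j)) _ hj
end

section
/- Let k, m, s be positive integers with s ≥ 2. If z is a nonzero element of R(k,m)^{⊗s}, then the element z' · z_{s+1,1}^{m+k−1} · z_{s+1,2}^{m+k−2} · … · z_{s+1,k}^m of R(k,m)^{⊗(s+1)} is nonzero, where z' denotes the image of z under the natural inclusion of R(k,m)^{⊗s} into the first s tensor factors of R(k,m)^{⊗(s+1)} (i.e., z ⊗ 1). -/
/-!
Put `N = m + k` and let `V` be the Vandermonde product `∏_{i<j} (x_j - x_i)`. The linear functional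
`φ(p) = coefficient of ∏_j x_j^(N-1) in p * V` on the polynomial ring descends to `R(k,m)`: the
telescoping identity `(a - b) h_d(a, b, L) = h_{d+1}(a, L) - h_{d+1}(b, L)` shows inductively that
`h_{N+1-l}(x_1, …, x_l) * V(x_1, …, x_l)` lies in the ideal `(x_1^N, …, x_l^N)`
(`completeHomog_mul_listVandermonde_mem`), and no element of that ideal has `∏_j x_j^(N-1)` in its
support.

Let `e_j = m + k - 1 - j` (`j` from `0`). Expanding `V` as a determinant shows that `φ(x^e) = 1` and
`φ(x^b) = 0` for every other `b ≤ e`: a contributing permutation `σ` satisfies `b_j + σ(j) = N - 1`,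
hence `σ(j) ≥ j` for all `j`, hence `σ = 1` and `b = e`.

Consequently `id ⊗ φ` sends `(z ⊗ 1) * ∏_j (x_{1,j} ⊗ 1 + 1 ⊗ x_j)^(e_j)` to `z`: after expanding the
product only the term `z ⊗ x^e` survives (`tmul_one_mul_prod_ne_zero`).
-/

set_option synthInstance.maxHeartbeats 1000000
set_option maxHeartbeats 1000000

open scoped TensorProduct

/-- The ring structure on `R(k,m)^{⊗s} ⊗ R(k,m)` (this is the instance provided by
`Algebra.TensorProduct.instCommRing`, registered here so that instance search finds it). -/
noncomputable instance (k m s : ℕ) :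
    CommRing ((⨂[ZMod 2] _ : Fin s, FlagRing k m) ⊗[ZMod 2] FlagRing k m) :=
  Algebra.TensorProduct.instCommRing (R := ZMod 2)
    (A := ⨂[ZMod 2] _ : Fin s, FlagRing k m) (B := FlagRing k m)

/-! ### Complete homogeneous polynomials and the Vandermonde product -/

section ListIdentities

variable {R : Type*} [CommRing R]

/-- The Vandermonde product `∏_{i<j} (x_j - x_i)` of a list `[x_0, x_1, …]`. -/
def listVandermonde : List R → R
  | [] => 1
  | a :: l => (l.map fun b => b - a).prod * listVandermonde l

lemma listVandermonde_dvd_append (l l' : List R) :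
    listVandermonde l ∣ listVandermonde (l ++ l') := by
  induction l with
  | nil => simp [listVandermonde]
  | cons a l ih =>
    simp only [List.cons_append, listVandermonde, List.map_append, List.prod_append]
    exact mul_dvd_mul (Dvd.intro _ rfl) ih

/-- The Vandermonde product clears the denominators in
`h_d(x_1, …, x_l) = ∑_i x_i^(d+l-1) / ∏_{j≠i} (x_i - x_j)`; here `d + l - 1 = N`. The induction
on the length `n` removes either of the first two entries by `sub_mul_completeHomog`. -/
lemma completeHomog_mul_listVandermonde_mem (J : Ideal R) (N : ℕ) :
    ∀ (n : ℕ) (l : List R) (d : ℕ), l.length = n → d + l.length = N + 1 →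
      (∀ a ∈ l, a ^ N ∈ J) → completeHomog l d * listVandermonde l ∈ J := by
  intro n
  induction n with
  | zero =>
    intro l d hl hd _
    obtain rfl := List.length_eq_zero_iff.mp hl
    obtain rfl : d = N + 1 := by simpa using hd
    simp [completeHomog]
  | succ n ih =>
    intro l d hl hd hJ
    match l, hl, hd, hJ with
    | [a], _, hd, hJ =>
      obtain rfl : d = N := by simpa using hd
      have h : completeHomog [a] d = a ^ d := by
        rw [completeHomog, Finset.sum_eq_single d]
        · simp [completeHomog]
        · intro t ht htd
          obtain ⟨c, hc⟩ : ∃ c, d - t = c + 1 := ⟨d - t - 1, by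
            have := Finset.mem_range.mp ht
            omega⟩
          simp [hc, completeHomog]
        · simp
      rw [h]
      exact J.mul_mem_right _ (hJ a (by simp))
    | a :: b :: l, hl, hd, hJ =>
      simp only [List.length_cons] at hl hd
      have ha := ih (a :: l) (d + 1) (by simp; omega) (by simp; omega)
        (fun c hc => hJ c (by simp at hc ⊢; tauto))
      have hb := ih (b :: l) (d + 1) (by simp; omega) (by simp; omega)
        (fun c hc => hJ c (by simp at hc ⊢; tauto))
      have key : completeHomog (a :: b :: l) d * listVandermonde (a :: b :: l) =
          (l.map fun c => c - a).prod * (completeHomog (b :: l) (d + 1) * listVandermonde (b :: l))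
          - (l.map fun c => c - b).prod *
            (completeHomog (a :: l) (d + 1) * listVandermonde (a :: l)) := by
        simp only [listVandermonde, List.map_cons, List.prod_cons]
        linear_combination (-(l.map fun c => c - a).prod * (l.map fun c => c - b).prod *
          listVandermonde l) * sub_mul_completeHomog a b l d
      rw [key]
      exact J.sub_mem (J.mul_mem_left _ hb) (J.mul_mem_left _ ha)

lemma listVandermonde_ofFn {n : ℕ} (v : Fin n → R) :
    listVandermonde (List.ofFn v) = (Matrix.vandermonde v).det := by
  rw [Matrix.det_vandermonde]
  induction n with
  | zero => simp [listVandermonde]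
  | succ n ih =>
    rw [List.ofFn_succ, listVandermonde, ih, Fin.prod_univ_succ]
    congr 1
    · rw [Fin.prod_Ioi_zero, List.map_ofFn, List.prod_ofFn]
      rfl
    · refine Finset.prod_congr rfl fun i _ => ?_
      rw [Fin.prod_Ioi_succ]

end ListIdentities

/-! ### The top-coefficient functional on `R(k,m)` -/

section Functional

open MvPolynomial

/-- The functional `p ↦` coefficient of `∏_j x_j^(m+k-1)` in `p * ∏_{i<j} (x_j - x_i)`. -/
noncomputable def topCoeffPoly (k m : ℕ) : MvPolynomial (Fin k) (ZMod 2) →ₗ[ZMod 2] ZMod 2 :=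
  lcoeff (ZMod 2) (Finsupp.equivFunOnFinite.symm fun _ : Fin k => m + k - 1) ∘ₗ
    LinearMap.mulRight (ZMod 2) (listVandermonde ((List.finRange k).map X))

lemma topCoeffPoly_apply (k m : ℕ) (p : MvPolynomial (Fin k) (ZMod 2)) :
    topCoeffPoly k m p = coeff (Finsupp.equivFunOnFinite.symm fun _ : Fin k => m + k - 1)
      (p * listVandermonde ((List.finRange k).map X)) := rfl

lemma mul_listVandermonde_mem {k m : ℕ} {p : MvPolynomial (Fin k) (ZMod 2)}
    (hp : p ∈ flagIdeal k m) :
    p * listVandermonde ((List.finRange k).map X) ∈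
      Ideal.span (Set.range fun j : Fin k => (X j : MvPolynomial (Fin k) (ZMod 2)) ^ (m + k)) := by
  induction hp using Submodule.span_induction with
  | mem p hp =>
    obtain ⟨i, hi1, hik, rfl⟩ := hp
    set J := Ideal.span
      (Set.range fun j : Fin k => (X j : MvPolynomial (Fin k) (ZMod 2)) ^ (m + k)) with hJ
    obtain ⟨c, hc⟩ := listVandermonde_dvd_append
      (((List.finRange k).take (k + 1 - i)).map
        (X : Fin k → MvPolynomial (Fin k) (ZMod 2)))
      (((List.finRange k).drop (k + 1 - i)).map X)
    rw [← List.map_append, List.take_append_drop] at hc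
    rw [hc, ← mul_assoc]
    refine J.mul_mem_right _ (completeHomog_mul_listVandermonde_mem J (m + k) _ _ _ rfl ?_ ?_)
    · simp only [List.length_map, List.length_take, List.length_finRange]
      omega
    · intro a ha
      obtain ⟨j, -, rfl⟩ := List.mem_map.mp ha
      exact Ideal.subset_span ⟨j, rfl⟩
  | zero => simp
  | add p q _ _ hp hq =>
    rw [add_mul]
    exact Ideal.add_mem _ hp hq
  | smul c p _ hp =>
    rw [smul_eq_mul, mul_assoc]
    exact Ideal.mul_mem_left _ _ hp

lemma topCoeffPoly_eq_zero {k m : ℕ} (hm : 0 < m) {p : MvPolynomial (Fin k) (ZMod 2)}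
    (hp : p ∈ flagIdeal k m) : topCoeffPoly k m p = 0 := by
  rw [topCoeffPoly_apply]
  have h := mul_listVandermonde_mem hp
  obtain ⟨c, hc⟩ := Ideal.mem_span_range_iff_exists_fun.mp h
  rw [← hc, coeff_sum]
  refine Finset.sum_eq_zero fun j _ => ?_
  rw [X_pow_eq_monomial, coeff_mul_monomial', if_neg]
  intro hle
  have := hle j
  simp at this
  omega

/-- `topCoeffPoly` descended to `R(k,m)`. -/
noncomputable def topCoeff (k m : ℕ) (hm : 0 < m) : FlagRing k m →ₗ[ZMod 2] ZMod 2 :=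
  ((flagIdeal k m).restrictScalars (ZMod 2)).liftQ (topCoeffPoly k m)
    fun _ hp => topCoeffPoly_eq_zero hm hp

lemma topCoeff_prod (k m : ℕ) (hm : 0 < m) (b : Fin k → ℕ) :
    topCoeff k m hm (∏ j, xGen k m j ^ b j) = topCoeffPoly k m (∏ j, X j ^ b j) := by
  have : (∏ j, xGen k m j ^ b j) = Ideal.Quotient.mk (flagIdeal k m) (∏ j, X j ^ b j) := by
    simp [xGen]
  rw [this]
  rfl

/-- The value on a monomial, from the Leibniz expansion of the Vandermonde determinant. -/
lemma topCoeffPoly_prod (k m : ℕ) (b : Fin k → ℕ) :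
    topCoeffPoly k m (∏ j, X j ^ b j) = ∑ σ : Equiv.Perm (Fin k),
      ((Equiv.Perm.sign σ : ℤ) : ZMod 2) *
        if ∀ j, b j + (σ j : ℕ) = m + k - 1 then 1 else 0 := by
  rw [topCoeffPoly_apply, ← List.ofFn_eq_map, listVandermonde_ofFn, ← Matrix.det_transpose,
    Matrix.det_apply', Finset.mul_sum, coeff_sum]
  refine Finset.sum_congr rfl fun σ _ => ?_
  have h : (∏ j, X j ^ b j : MvPolynomial (Fin k) (ZMod 2)) *
      (((Equiv.Perm.sign σ : ℤ) : MvPolynomial (Fin k) (ZMod 2)) *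
        ∏ i, (Matrix.vandermonde X).transpose (σ i) i) =
      C ((Equiv.Perm.sign σ : ℤ) : ZMod 2) *
        monomial (Finsupp.equivFunOnFinite.symm fun j => b j + (σ j : ℕ)) 1 := by
    rw [monomial_eq, Finsupp.prod_fintype _ _ (by simp)]
    simp only [Matrix.transpose_apply, Matrix.vandermonde_apply, Finsupp.equivFunOnFinite_symm_apply_apply,
      pow_add, Finset.prod_mul_distrib, map_intCast, map_one]
    ring
  rw [h, coeff_C_mul, coeff_monomial]
  congr 1
  simp only [EmbeddingLike.apply_eq_iff_eq, funext_iff]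

lemma perm_eq_one_of_le {k : ℕ} (σ : Equiv.Perm (Fin k)) (h : ∀ j, j ≤ σ j) : σ = 1 := by
  have hs : ∑ j : Fin k, (j : ℕ) = ∑ j, (σ j : ℕ) :=
    (Equiv.sum_comp σ fun j : Fin k => (j : ℕ)).symm
  have := (Finset.sum_eq_sum_iff_of_le fun j _ => Fin.le_def.mp (h j)).mp hs
  ext j
  simp [← this j (Finset.mem_univ j)]

lemma topCoeff_prod_of_le (k m : ℕ) (hm : 0 < m) (b : Fin k → ℕ)
    (hb : ∀ j, b j ≤ m + k - 1 - j.val) :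
    topCoeff k m hm (∏ j, xGen k m j ^ b j) =
      if ∀ j, b j = m + k - 1 - j.val then 1 else 0 := by
  rw [topCoeff_prod, topCoeffPoly_prod, Finset.sum_eq_single 1]
  · simp only [Equiv.Perm.sign_one, Units.val_one, Int.cast_one, one_mul, Equiv.Perm.one_apply]
    refine if_congr (forall_congr' fun j => ?_) rfl rfl
    have := j.isLt
    omega
  · intro σ _ hσ
    rw [if_neg, mul_zero]
    refine fun h => hσ (perm_eq_one_of_le σ fun j => ?_)
    have := h j
    have := hb j
    have := j.isLt
    rw [Fin.le_def]
    omega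
  · simp

end Functional

/-! ### Extracting the leading term -/

/-- If `φ` is dual to `x^e` among the monomials `x^b` with `b ≤ e`, then `id ⊗ φ` maps
`(z ⊗ 1) * ∏_j (a_j ⊗ 1 + 1 ⊗ x_j)^(e_j)` to `z`, so this product does not vanish. -/
lemma tmul_one_mul_prod_ne_zero {F A R : Type*} [Field F] [CommRing A] [Algebra F A]
    [CommRing R] [Algebra F R] {k : ℕ} (e : Fin k → ℕ) (a : Fin k → A) (x : Fin k → R)
    (φ : R →ₗ[F] F)
    (hφ : ∀ b : Fin k → ℕ, (∀ j, b j ≤ e j) →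
      φ (∏ j, x j ^ b j) = if ∀ j, b j = e j then 1 else 0)
    (z : A) (hz : z ≠ 0) :
    (z ⊗ₜ[F] (1 : R)) * ∏ j, (a j ⊗ₜ[F] (1 : R) + (1 : A) ⊗ₜ[F] x j) ^ e j ≠ 0 := by
  intro h
  apply hz
  have expand : (z ⊗ₜ[F] (1 : R)) * ∏ j, (a j ⊗ₜ[F] (1 : R) + (1 : A) ⊗ₜ[F] x j) ^ e j =
      ∑ t ∈ Fintype.piFinset fun j => Finset.range (e j + 1),
        (z * ∏ j, (a j ^ t j * ((e j).choose (t j) : A))) ⊗ₜ[F] ∏ j, x j ^ (e j - t j) := by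
    simp only [add_pow]
    rw [Finset.prod_univ_sum, Finset.mul_sum]
    refine Finset.sum_congr rfl fun t _ => ?_
    have : ∀ j, (a j ⊗ₜ[F] (1 : R)) ^ t j * ((1 : A) ⊗ₜ[F] x j) ^ (e j - t j) *
        ((e j).choose (t j) : A ⊗[F] R) =
        (a j ^ t j * ((e j).choose (t j) : A)) ⊗ₜ[F] (x j ^ (e j - t j)) := by
      intro j
      have hc : ((e j).choose (t j) : A ⊗[F] R) = ((e j).choose (t j) : A) ⊗ₜ[F] (1 : R) := by
        rw [← map_natCast (Algebra.TensorProduct.includeLeft : A →ₐ[F] A ⊗[F] R)]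
        rfl
      rw [hc]
      simp [Algebra.TensorProduct.tmul_pow, Algebra.TensorProduct.tmul_mul_tmul]
    simp only [this]
    have hprod : ∀ (u : Fin k → A) (v : Fin k → R),
        ∏ j, (u j ⊗ₜ[F] v j) = (∏ j, u j) ⊗ₜ[F] (∏ j, v j) := by
      intro u v
      have := fun j => (Algebra.TensorProduct.tmul_mul_tmul (R := F) (u j) 1 1 (v j))
      have h1 := map_prod (Algebra.TensorProduct.includeLeft : A →ₐ[F] A ⊗[F] R) u Finset.univ
      have h2 := map_prod (Algebra.TensorProduct.includeRight : R →ₐ[F] A ⊗[F] R) v Finset.univ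
      simp only [Algebra.TensorProduct.includeLeft_apply,
        Algebra.TensorProduct.includeRight_apply] at h1 h2
      simp only [mul_one, one_mul] at this
      simp only [← this, Finset.prod_mul_distrib, ← h1, ← h2]
      simp
    rw [hprod, Algebra.TensorProduct.tmul_mul_tmul, one_mul]
  have hmap := congrArg (fun w => TensorProduct.rid F A (LinearMap.lTensor A φ w)) (expand.symm.trans h)
  simp only [map_sum, LinearMap.lTensor_tmul, TensorProduct.rid_tmul, map_zero] at hmap
  rw [Finset.sum_eq_single 0] at hmap
  · simpa [hφ e (fun _ => le_rfl)] using hmap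
  · intro t ht ht0
    rw [hφ _ fun j => Nat.sub_le _ _, if_neg, zero_smul]
    refine fun hall => ht0 (funext fun j => ?_)
    have h1 := hall j
    have h2 := Finset.mem_range.mp (Fintype.mem_piFinset.mp ht j)
    simp only [Pi.zero_apply]
    omega
  · intro h0
    exact absurd (Fintype.mem_piFinset.mpr fun j => by simp) h0

/-- if `z ≠ 0` in `R(k,m)^{⊗s}`, then
`(z ⊗ 1) · z_{s+1,1}^{m+k-1} z_{s+1,2}^{m+k-2} ⋯ z_{s+1,k}^m ≠ 0` in
`R(k,m)^{⊗(s+1)}`, the latter realized as `R(k,m)^{⊗s} ⊗ R(k,m)` with the natural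
inclusion `z ↦ z ⊗ 1` and `z_{s+1,j} = x_{1,j} ⊗ 1 + 1 ⊗ x_j`. -/
theorem statement15 (k m s : ℕ) (hk : 0 < k) (hm : 0 < m) (hs : 2 ≤ s)
    (z : ⨂[ZMod 2] _ : Fin s, FlagRing k m) (hz : z ≠ 0) :
    (z ⊗ₜ[ZMod 2] (1 : FlagRing k m)) *
      ∏ j : Fin k,
        (xT k m s ⟨0, by omega⟩ j ⊗ₜ[ZMod 2] (1 : FlagRing k m) +
            (1 : ⨂[ZMod 2] _ : Fin s, FlagRing k m) ⊗ₜ[ZMod 2] xGen k m j) ^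
          (m + k - 1 - j.val) ≠ 0 := by
  exact tmul_one_mul_prod_ne_zero (fun j => m + k - 1 - j.val) (xT k m s ⟨0, by omega⟩) (xGen k m)
    (topCoeff k m hm) (topCoeff_prod_of_le k m hm) z hz
end

section
/- Let s ≥ 3 and e ≥ 1 be integers. In R(1,2^e)^{⊗s}, where R(1,2^e) = (ZMod 2)[x]/(x^{2^e+1}), the element z_{2,1}^{2^{e+1}−1} · z_{3,1}^{2^e+1} · z_{4,1}^{2^e} · … · z_{s,1}^{2^e} is nonzero (the factors z_{i,1}^{2^e} for 4 ≤ i ≤ s being omitted if s = 3). -/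
/-!
Put `m = 2 ^ e`, let `a = x_1` and let `x_i` be the generator of the `i`-th tensor factor, so
that every `(m + 1)`-st power of a generator vanishes. In characteristic two
`z_i ^ m = a ^ m + x_i ^ m`, whence, after deleting multiples of `a ^ (m + 1)` and
`x_i ^ (m + 1)`,

* `z_2 ^ (2 m - 1) = a ^ m x_2 ^ (m - 1) + a ^ (m - 1) x_2 ^ m`,
* `z_3 ^ (m + 1) = a x_3 ^ m + a ^ m x_3`.

The product of these two is `a ^ m x_2 ^ m x_3 ^ m` (`first_factors_mul_eq`, which uses `m ≥ 2`),
and multiplying by the remaining `z_i ^ m` contributes `x_i ^ m` each, because `a ^ m` is already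
present (`mul_prod_add_eq`). The whole
product is therefore the pure tensor `x ^ m ⊗ ⋯ ⊗ x ^ m`. It is nonzero because `x ^ m ≠ 0` in
`R(1, m)` (`xGen_one_pow_ne_zero`), and over a field a pure tensor of nonzero vectors is detected by a product of linear
functionals (`tprod_const_ne_zero`).
-/

open scoped TensorProduct

theorem add_pow_two_pow_of_two_eq_zero {A : Type*} [CommRing A] (h2 : (2 : A) = 0)
    (a b : A) (e : ℕ) : (a + b) ^ 2 ^ e = a ^ 2 ^ e + b ^ 2 ^ e := by
  induction e with
  | zero => simp
  | succ e ih =>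
    simp only [pow_succ, pow_mul, ih]
    linear_combination (a ^ 2 ^ e * b ^ 2 ^ e) * h2

theorem mul_add_pow_of_mul_eq_zero {A : Type*} [CommRing A] {a c : A} (h : c * a = 0)
    (x : A) (n : ℕ) : c * (a + x) ^ n = c * x ^ n := by
  induction n with
  | zero => simp
  | succ n ih =>
    rw [pow_succ, ← mul_assoc, ih]
    linear_combination x ^ n * h

/-- The contribution of the first three tensor factors to the zero-divisor product. -/
theorem first_factors_mul_eq {A : Type*} [CommRing A] (h2 : (2 : A) = 0) (e : ℕ)
    (he : 1 ≤ e) {a b c : A} (ha : a ^ (2 ^ e + 1) = 0) (hb : b ^ (2 ^ e + 1) = 0)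
    (hc : c ^ (2 ^ e + 1) = 0) :
    (a + b) ^ (2 ^ (e + 1) - 1) * (a + c) ^ (2 ^ e + 1) =
      a ^ 2 ^ e * b ^ 2 ^ e * c ^ 2 ^ e := by
  have frob := add_pow_two_pow_of_two_eq_zero h2 (e := e)
  have hm : 2 ≤ 2 ^ e := le_self_pow₀ (by norm_num) (by omega)
  have hexp : 2 ^ (e + 1) - 1 = 2 ^ e + (2 ^ e - 1) := by
    rw [pow_succ]; omega
  rw [hexp, pow_add, pow_succ (a + c), frob, frob]
  generalize 2 ^ e = m at *
  obtain ⟨n, rfl⟩ : ∃ n, m = n + 2 := ⟨m - 2, by omega⟩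
  rw [show n + 2 - 1 = n + 1 by omega, add_mul,
    mul_add_pow_of_mul_eq_zero (c := a ^ (n + 2)) (by rw [← pow_succ, ha]), add_comm a b,
    mul_add_pow_of_mul_eq_zero (c := b ^ (n + 2)) (by rw [← pow_succ, hb])]
  linear_combination (b ^ (n + 1) * c ^ (n + 2) + b ^ (n + 1) * a ^ (n + 2)
    + b ^ (n + 1) * a ^ (n + 1) * c + b ^ (n + 2) * a ^ n * c + b ^ (n + 2) * a ^ (n + 1)) * ha
    + (a ^ (n + 2) * b ^ (n + 1) + b ^ (n + 2) * a ^ (n + 1)) * hc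

theorem mul_prod_add_eq {A ι : Type*} [CommRing A] {c d : A} (h : c * d = 0)
    (t : Finset ι) (f : ι → A) : c * ∏ i ∈ t, (d + f i) = c * ∏ i ∈ t, f i := by
  classical
  induction t using Finset.induction_on with
  | empty => simp
  | insert i t hi ih =>
    rw [Finset.prod_insert hi, Finset.prod_insert hi]
    linear_combination (d + f i) * ih + (∏ j ∈ t, f j) * h

theorem flagIdeal_one (m : ℕ) :
    flagIdeal 1 m = Ideal.span {(MvPolynomial.X 0 : MvPolynomial (Fin 1) (ZMod 2)) ^ (m + 1)} := by
  have key : completeHomog [(MvPolynomial.X 0 : MvPolynomial (Fin 1) (ZMod 2))] (m + 1) =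
      MvPolynomial.X 0 ^ (m + 1) := by
    rw [completeHomog, Finset.sum_eq_single (m + 1)]
    · simp [completeHomog]
    · intro t ht htm
      obtain ⟨r, hr⟩ : ∃ r, m + 1 - t = r + 1 :=
        ⟨m - t, by have := Finset.mem_range.mp ht; omega⟩
      simp [hr, completeHomog]
    · simp
  unfold flagIdeal
  congr 1
  ext p
  simp only [Set.mem_ofPred_eq, Set.mem_singleton_iff]
  constructor
  · rintro ⟨i, h1, h2, rfl⟩
    obtain rfl : i = 1 := by omega
    simpa [List.finRange_succ] using key
  · rintro rfl
    exact ⟨1, le_rfl, le_rfl, by simpa [List.finRange_succ] using key.symm⟩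

theorem xGen_one_pow_succ (m : ℕ) : xGen 1 m 0 ^ (m + 1) = 0 := by
  rw [xGen, ← map_pow, Ideal.Quotient.eq_zero_iff_mem, flagIdeal_one]
  exact Ideal.mem_span_singleton_self _

theorem xGen_one_pow_ne_zero (m : ℕ) : xGen 1 m 0 ^ m ≠ 0 := by
  rw [xGen, ← map_pow, Ne, Ideal.Quotient.eq_zero_iff_mem, flagIdeal_one,
    Ideal.mem_span_singleton]
  intro h
  have h' := map_dvd (MvPolynomial.aeval (fun _ : Fin 1 => (Polynomial.X : Polynomial (ZMod 2)))) h
  simp only [map_pow, MvPolynomial.aeval_X] at h'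
  have := (pow_dvd_pow_iff Polynomial.X_ne_zero Polynomial.not_isUnit_X).mp h'
  omega

theorem tprod_const_ne_zero {K V ι : Type*} [Field K] [AddCommGroup V] [Module K V] [Fintype ι]
    {v : V} (hv : v ≠ 0) : PiTensorProduct.tprod K (fun _ : ι => v) ≠ 0 := by
  obtain ⟨φ, hφ⟩ : ∃ φ : Module.Dual K V, φ v ≠ 0 := by
    by_contra! h
    exact hv ((Module.forall_dual_apply_eq_zero_iff K v).mp h)
  intro h
  have h' := congrArg (PiTensorProduct.lift
    ((MultilinearMap.mkPiAlgebra K ι K).compLinearMap (fun _ => φ))) h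
  simp [hφ] at h'

/-- The element of a tensor power having `x` in the `i`-th factor and `1` elsewhere. -/
noncomputable def singleTensor (K : Type*) {B ι : Type*} [Field K] [CommRing B] [Algebra K B]
    [DecidableEq ι] (x : B) (i : ι) : ⨂[K] _ : ι, B :=
  PiTensorProduct.tprod K (fun t => if t = i then x else 1)

theorem singleTensor_pow {K B ι : Type*} [Field K] [CommRing B] [Algebra K B] [DecidableEq ι]
    (x : B) (i : ι) (n : ℕ) : singleTensor K x i ^ n = singleTensor K (x ^ n) i := by
  unfold singleTensor
  refine (map_pow (PiTensorProduct.tprodMonoidHom K)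
    (fun t : ι => if t = i then x else 1) n).symm.trans ?_
  refine congrArg (PiTensorProduct.tprod K) (funext fun t => ?_)
  by_cases h : t = i <;> simp [h]

theorem prod_singleTensor {K B ι : Type*} [Field K] [CommRing B] [Algebra K B] [DecidableEq ι]
    [Fintype ι] (x : B) :
    ∏ i, singleTensor K x i = PiTensorProduct.tprod K (fun _ : ι => x) := by
  unfold singleTensor
  rw [← PiTensorProduct.tprod_prod]
  refine congrArg (PiTensorProduct.tprod K) (funext fun t => ?_)
  simp [Finset.prod_apply]

/-- The zero-divisor product is nonzero for any algebra `B` over a field of characteristic two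
and any `x : B` whose powers vanish exactly from the exponent `2 ^ e + 1` on. The tensor factors
are indexed from `0`, so `i₀`, `i₁`, `i₂` are the first three. -/
theorem zero_divisor_product_ne_zero {K B : Type*} [Field K] [CommRing B] [Algebra K B]
    (hK : (2 : K) = 0) (s e : ℕ) (he : 1 ≤ e) {i₀ i₁ i₂ : Fin s}
    (h₀ : i₀.val = 0) (h₁ : i₁.val = 1) (h₂ : i₂.val = 2) {x : B}
    (hx0 : x ^ (2 ^ e + 1) = 0) (hx1 : x ^ 2 ^ e ≠ 0) :
    (singleTensor K x i₀ + singleTensor K x i₁) ^ (2 ^ (e + 1) - 1) *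
      (singleTensor K x i₀ + singleTensor K x i₂) ^ (2 ^ e + 1) *
      ∏ i ∈ Finset.univ.filter (fun i : Fin s => 3 ≤ i.val),
        (singleTensor K x i₀ + singleTensor K x i) ^ (2 ^ e) ≠ 0 := by
  have h2 : (2 : ⨂[K] _ : Fin s, B) = 0 := by
    rw [← map_ofNat (algebraMap K (⨂[K] _ : Fin s, B)) 2]
    exact (congrArg _ hK).trans (map_zero _)
  have hx : ∀ i : Fin s, singleTensor K x i ^ (2 ^ e + 1) = 0 := by
    intro i
    rw [singleTensor_pow, hx0]
    exact (PiTensorProduct.tprod K).map_coord_zero i (by simp)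
  have hsplit : (Finset.univ : Finset (Fin s)) =
      insert i₀ (insert i₁ (insert i₂
        (Finset.univ.filter (fun i : Fin s => 3 ≤ i.val)))) := by
    ext i
    simp only [Finset.mem_univ, Finset.mem_insert, Finset.mem_filter, Fin.ext_iff, true_and,
      true_iff]
    omega
  have htop := prod_singleTensor (K := K) (ι := Fin s) (x ^ 2 ^ e)
  simp only [← singleTensor_pow] at htop
  rw [hsplit, Finset.prod_insert (by simp [Fin.ext_iff, h₀, h₁, h₂]),
    Finset.prod_insert (by simp [Fin.ext_iff, h₁, h₂]), Finset.prod_insert (by simp [h₂])] at htop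
  rw [first_factors_mul_eq h2 e he (hx _) (hx _) (hx _)]
  simp only [add_pow_two_pow_of_two_eq_zero h2]
  rw [mul_prod_add_eq]
  · rw [mul_assoc, mul_assoc, htop]
    exact tprod_const_ne_zero hx1
  · have haa : singleTensor K x i₀ ^ 2 ^ e * singleTensor K x i₀ ^ 2 ^ e = 0 := by
      rw [← pow_add]
      exact pow_eq_zero_of_le (by have := Nat.one_le_two_pow (n := e); omega) (hx _)
    rw [mul_right_comm, mul_right_comm (singleTensor K x _ ^ _), haa, zero_mul, zero_mul]

/-- for `s ≥ 3` and `e ≥ 1`, in `R(1, 2^e)^{⊗s}` (with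
`R(1, 2^e) = (ZMod 2)[x]/(x^{2^e+1})`) one has
`z_{2,1}^{2^{e+1}-1} · z_{3,1}^{2^e+1} · z_{4,1}^{2^e} ⋯ z_{s,1}^{2^e} ≠ 0`. -/
theorem statement16 (s e : ℕ) (hs : 3 ≤ s) (he : 1 ≤ e) :
    zT 1 (2 ^ e) s (by omega) ⟨1, by omega⟩ 0 ^ (2 ^ (e + 1) - 1) *
      zT 1 (2 ^ e) s (by omega) ⟨2, by omega⟩ 0 ^ (2 ^ e + 1) *
      ∏ i ∈ Finset.univ.filter (fun i : Fin s => 3 ≤ i.val),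
        zT 1 (2 ^ e) s (by omega) i 0 ^ (2 ^ e) ≠ 0 :=
  zero_divisor_product_ne_zero (K := ZMod 2) (B := FlagRing 1 (2 ^ e)) rfl s e he rfl rfl rfl
    (xGen_one_pow_succ _) (xGen_one_pow_ne_zero _)
end
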